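/- arXiv:1709.08265 — 10 statements merged into one kernel-verified Lean document; each statement's English description precedes it below -/
import Mathlib

section
/- Let C be a group system and ℓ ≥ 0 an integer. Then C is ℓ-controllable if and only if for every t ∈ ℤ the set product C^{(t+ℓ)−}·C^{t+} equals all of C. -/
open scoped Pointwise

namespace GroupSystemPaper

variable {A : ℤ → Type*} [∀ t, Group (A t)]

/-- `C^{t+}` : codewords of the group system `C` that are the identity before time `t`. -/
def Cplus (C : Subgroup (∀ t, A t)) (t : ℤ) : Subgroup C where
  carrier := {a | ∀ n < t, (a : ∀ s, A s) n = 1}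
  one_mem' := by intro n hn; simp
  mul_mem' := by intro a b ha hb n hn; simp [ha n hn, hb n hn]
  inv_mem' := by intro a ha n hn; simp [ha n hn]

/-- `C^{t−}` : codewords of the group system `C` that are the identity from time `t` on. -/
def Cminus (C : Subgroup (∀ t, A t)) (t : ℤ) : Subgroup C where
  carrier := {a | ∀ n, t ≤ n → (a : ∀ s, A s) n = 1}
  one_mem' := by intro n hn; simp
  mul_mem' := by intro a b ha hb n hn; simp [ha n hn, hb n hn]
  inv_mem' := by intro a ha n hn; simp [ha n hn]

/-- `C^{[t₁,t₂]}` : codewords supported on the interval `[t₁, t₂]`. -/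
def Cint (C : Subgroup (∀ t, A t)) (t₁ t₂ : ℤ) : Subgroup C :=
  Cplus C t₁ ⊓ Cminus C (t₂ + 1)

instance Cplus_normal (C : Subgroup (∀ t, A t)) (t : ℤ) : (Cplus C t).Normal := by
  constructor
  intro x hx g n hn
  have h1 : (x : ∀ s, A s) n = 1 := hx n hn
  simp [h1]

instance Cminus_normal (C : Subgroup (∀ t, A t)) (t : ℤ) : (Cminus C t).Normal := by
  constructor
  intro x hx g n hn
  have h1 : (x : ∀ s, A s) n = 1 := hx n hn
  simp [h1]

instance Cint_normal (C : Subgroup (∀ t, A t)) (t₁ t₂ : ℤ) : (Cint C t₁ t₂).Normal := by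
  constructor
  intro x hx g
  rcases Subgroup.mem_inf.mp hx with ⟨h1, h2⟩
  exact Subgroup.mem_inf.mpr
    ⟨(Cplus_normal C t₁).conj_mem _ h1 g, (Cminus_normal C (t₂ + 1)).conj_mem _ h2 g⟩

/-- The normal subgroup `C^{t−}C^{t+}` of `C`. -/
def stateN (C : Subgroup (∀ t, A t)) (t : ℤ) : Subgroup C :=
  Cminus C t ⊔ Cplus C t

instance stateN_normal (C : Subgroup (∀ t, A t)) (t : ℤ) : (stateN C t).Normal :=
  Subgroup.sup_normal _ _

/-- The canonical state space `Σ^t = C/(C^{t−}C^{t+})`. -/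
abbrev State (C : Subgroup (∀ t, A t)) (t : ℤ) : Type _ :=
  ↥C ⧸ stateN C t

/-- The state projection `σ^t : C → Σ^t`. -/
def sigma (C : Subgroup (∀ t, A t)) (t : ℤ) : ↥C →* State C t :=
  QuotientGroup.mk' (stateN C t)

/-- The evaluation homomorphism `χ^t : C → A^t`. -/
def evalHom (C : Subgroup (∀ t, A t)) (t : ℤ) : ↥C →* A t :=
  (Pi.evalMonoidHom A t).comp C.subtype

/-- The branch homomorphism `β^t : C → Σ^t × A^t × Σ^{t+1}`. -/
def beta (C : Subgroup (∀ t, A t)) (t : ℤ) :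
    ↥C →* State C t × A t × State C (t + 1) :=
  (sigma C t).prod ((evalHom C t).prod (sigma C (t + 1)))

/-- The branch group `B^t = β^t(C)`. -/
def Branch (C : Subgroup (∀ t, A t)) (t : ℤ) :
    Subgroup (State C t × A t × State C (t + 1)) :=
  (beta C t).range

/-- `β^t` with codomain restricted to the branch group `B^t`. -/
def betaRes (C : Subgroup (∀ t, A t)) (t : ℤ) : ↥C →* ↥(Branch C t) :=
  (beta C t).rangeRestrict

/-- `X_j^t = β^t(C^{(t−j)+})` as a subgroup of the branch group `B^t`. -/
def X (C : Subgroup (∀ t, A t)) (j t : ℤ) : Subgroup ↥(Branch C t) :=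
  (Cplus C (t - j)).map (betaRes C t)

/-- `Y_i^t = β^t(C^{(t+i+1)−})` as a subgroup of the branch group `B^t`. -/
def Y (C : Subgroup (∀ t, A t)) (i t : ℤ) : Subgroup ↥(Branch C t) :=
  (Cminus C (t + i + 1)).map (betaRes C t)

instance X_normal (C : Subgroup (∀ t, A t)) (j t : ℤ) : (X C j t).Normal :=
  (Cplus_normal C (t - j)).map _ (MonoidHom.rangeRestrict_surjective _)

instance Y_normal (C : Subgroup (∀ t, A t)) (i t : ℤ) : (Y C i t).Normal :=
  (Cminus_normal C (t + i + 1)).map _ (MonoidHom.rangeRestrict_surjective _)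

/-- `Δ_k^t = X_0^t ∩ Y_k^t`. -/
def Del (C : Subgroup (∀ t, A t)) (k t : ℤ) : Subgroup ↥(Branch C t) :=
  X C 0 t ⊓ Y C k t

/-- `D_k^t = {a ∈ C : β^t(a) ∈ Δ_k^t}`. -/
def D (C : Subgroup (∀ t, A t)) (k t : ℤ) : Subgroup ↥C :=
  (Del C k t).comap (betaRes C t)

/-- Following-branch operator: for `S ⊆ B^{t₁}`,
`FSet C t₁ t₂ S = {β^{t₂}(a) : a ∈ C, β^{t₁}(a) ∈ S}`. -/
def FSet (C : Subgroup (∀ t, A t)) (t₁ t₂ : ℤ) (S : Set ↥(Branch C t₁)) :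
    Set ↥(Branch C t₂) :=
  {x | ∃ a : ↥C, betaRes C t₁ a ∈ S ∧ betaRes C t₂ a = x}

/-- `π^{[t,t+k]} : C → B^t × ⋯ × B^{t+k}`, `a ↦ (β^t(a), …, β^{t+k}(a))`. -/
def piSeg (C : Subgroup (∀ t, A t)) (t : ℤ) (k : ℕ) :
    ↥C →* ∀ j : Fin (k + 1), ↥(Branch C (t + ((j : ℕ) : ℤ))) where
  toFun a := fun j => betaRes C (t + ((j : ℕ) : ℤ)) a
  map_one' := by funext j; simp
  map_mul' a b := by funext j; simp

/-- `π^{[t,t+k]}(D_m^t)`. -/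
def Pseg (C : Subgroup (∀ t, A t)) (t : ℤ) (k : ℕ) (m : ℤ) :
    Subgroup (∀ j : Fin (k + 1), ↥(Branch C (t + ((j : ℕ) : ℤ)))) :=
  (D C m t).map (piSeg C t k)

/-- `β^{t+j}(D_m^t)` : the image of `D_m^t` in the branch group at time `t + j`. -/
def Qb (C : Subgroup (∀ t, A t)) (t m j : ℤ) : Subgroup ↥(Branch C (t + j)) :=
  (D C m t).map (betaRes C (t + j))

/-- The normal subgroup `C^{[t,t+k−1]}C^{[t+1,t+k]}` of `C` (denominator of the granule). -/
def granN (C : Subgroup (∀ t, A t)) (t : ℤ) (k : ℕ) : Subgroup ↥C :=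
  Cint C t (t + k - 1) ⊔ Cint C (t + 1) (t + k)

instance granN_normal (C : Subgroup (∀ t, A t)) (t : ℤ) (k : ℕ) : (granN C t k).Normal :=
  Subgroup.sup_normal _ _

lemma mem_D_of_mem_Cint (C : Subgroup (∀ t, A t)) (t : ℤ) (k : ℕ) {a : ↥C}
    (ha : a ∈ Cint C t (t + k)) : a ∈ D C (k : ℤ) t := by
  rcases Subgroup.mem_inf.mp ha with ⟨h1, h2⟩
  refine Subgroup.mem_comap.mpr (Subgroup.mem_inf.mpr ⟨?_, ?_⟩)
  · exact Subgroup.mem_map.mpr ⟨a, by simpa using h1, rfl⟩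
  · exact Subgroup.mem_map.mpr ⟨a, h2, rfl⟩

/-- `ℓ`-controllability of the group system `C`. -/
def Controllable (C : Subgroup (∀ t, A t)) (ℓ : ℕ) : Prop :=
  ∀ a b : ↥C, ∀ t : ℤ, ∃ c : ↥C,
    (∀ n < t, (c : ∀ s, A s) n = (a : ∀ s, A s) n) ∧
    (∀ n, t + (ℓ : ℤ) ≤ n → (c : ∀ s, A s) n = (b : ∀ s, A s) n)


/-- `C` is `ℓ`-controllable iff for every `t ∈ ℤ` the set product
`C^{(t+ℓ)−}·C^{t+}` equals all of `C`. -/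
theorem statement1 (C : Subgroup (∀ t, A t)) (ℓ : ℕ) :
    Controllable C ℓ ↔
      ∀ t : ℤ, (Cminus C (t + (ℓ : ℤ)) : Set ↥C) * (Cplus C t : Set ↥C) = Set.univ := by
  constructor
  · intro h t
    refine Set.eq_univ_of_forall fun a => ?_
    obtain ⟨c, h1, h2⟩ := h a 1 t
    refine Set.mem_mul.mpr ⟨c, ?_, c⁻¹ * a, ?_, by simp⟩
    · intro n hn
      simpa using h2 n hn
    · intro n hn
      simp [h1 n hn]
  · intro h a b t
    have hm : a * b⁻¹ ∈ (Cminus C (t + (ℓ : ℤ)) : Set ↥C) * (Cplus C t : Set ↥C) := by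
      rw [h t]; trivial
    obtain ⟨m, hm, p, hp, e⟩ := Set.mem_mul.mp hm
    refine ⟨m * b, ?_, ?_⟩
    · intro n hn
      have hp1 : (p : ∀ s, A s) n = 1 := hp n hn
      have e1 := congrArg (fun x : ↥C => (x : ∀ s, A s) n) e
      simp [hp1] at e1
      simp [e1]
    · intro n hn
      have hm1 : (m : ∀ s, A s) n = 1 := hm n hn
      simp [hm1]

end GroupSystemPaper
end

section
/- Let C be a group system and ℓ ≥ 0 an integer. The following are equivalent: (i) C is ℓ-controllable; (ii) X_ℓ^t = B^t for every t ∈ ℤ; (iii) Y_ℓ^t = B^t for every t ∈ ℤ. -/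
open scoped Pointwise

namespace GroupSystemPaper

variable {A : ℤ → Type*} [∀ t, Group (A t)]

lemma ker_betaRes (C : Subgroup (∀ t, A t)) (t : ℤ) :
    (betaRes C t).ker = Cminus C t ⊔ Cplus C (t + 1) := by
  have hk : ∀ a : ↥C, a ∈ (betaRes C t).ker ↔
      a ∈ stateN C t ∧ (a : ∀ s, A s) t = 1 ∧ a ∈ stateN C (t + 1) := by
    intro a
    have h1 : (betaRes C t).ker = (beta C t).ker := MonoidHom.ker_rangeRestrict _
    rw [h1, MonoidHom.mem_ker]
    simp [beta, sigma, evalHom, Prod.ext_iff]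
  apply le_antisymm
  · intro a ha
    obtain ⟨h1, h2, -⟩ := (hk a).1 ha
    obtain ⟨u, hu, v, hv, rfl⟩ := Subgroup.mem_sup_of_normal_left.1 h1
    refine Subgroup.mul_mem_sup hu (show v ∈ Cplus C (t + 1) from ?_)
    intro n hn
    rcases lt_or_eq_of_le (Int.lt_add_one_iff.1 hn) with h | rfl
    · exact hv n h
    · have h3 : (u : ∀ s, A s) n = 1 := hu n le_rfl
      simpa [h3] using h2
  · refine sup_le (fun a ha => (hk a).2 ⟨?_, ha t le_rfl, ?_⟩)
      (fun a ha => (hk a).2 ⟨?_, ha t (by omega), ?_⟩)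
    · exact Subgroup.mem_sup_left ha
    · exact Subgroup.mem_sup_left fun n hn => ha n (by omega)
    · exact Subgroup.mem_sup_right fun n hn => ha n (by omega)
    · exact Subgroup.mem_sup_right ha

lemma map_betaRes_eq_top (C : Subgroup (∀ t, A t)) (t : ℤ) (H : Subgroup ↥C) :
    H.map (betaRes C t) = ⊤ ↔ H ⊔ (Cminus C t ⊔ Cplus C (t + 1)) = ⊤ := by
  have hs : Function.Surjective (betaRes C t) := MonoidHom.rangeRestrict_surjective _
  rw [← ker_betaRes, ← Subgroup.comap_map_eq, ← (Subgroup.comap_injective hs).eq_iff,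
    Subgroup.comap_top]

lemma controllable_iff (C : Subgroup (∀ t, A t)) (ℓ : ℕ) :
    Controllable C ℓ ↔ ∀ t : ℤ, Cminus C (t + ℓ) ⊔ Cplus C t = ⊤ := by
  constructor
  · intro h t
    rw [eq_top_iff]
    intro a _
    obtain ⟨c, h1, h2⟩ := h a 1 t
    refine Subgroup.mem_sup_of_normal_left.2 ⟨c, fun n hn => by simpa using h2 n hn, c⁻¹ * a, ?_, by group⟩
    intro n hn
    simp [h1 n hn]
  · intro h a b t
    have hm : a * b⁻¹ ∈ Cminus C (t + ℓ) ⊔ Cplus C t := by rw [h t]; trivial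
    obtain ⟨u, hu, v, hv, huv⟩ := Subgroup.mem_sup_of_normal_left.1 hm
    refine ⟨u * b, fun n hn => ?_, fun n hn => ?_⟩
    · have h3 : (v : ∀ s, A s) n = 1 := hv n hn
      have h4 : a = u * v * b := by rw [huv]; group
      simp [h4, h3]
    · have h3 : (u : ∀ s, A s) n = 1 := hu n hn
      simp [h3]

lemma X_eq_top_iff (C : Subgroup (∀ t, A t)) (ℓ : ℕ) (t : ℤ) :
    X C (ℓ : ℤ) t = ⊤ ↔ Cminus C t ⊔ Cplus C (t - ℓ) = ⊤ := by
  have hle : Cplus C (t + 1) ≤ Cplus C (t - ℓ) := fun a ha n hn => ha n (by omega)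
  rw [X, map_betaRes_eq_top, sup_left_comm, sup_eq_left.2 hle]

lemma Y_eq_top_iff (C : Subgroup (∀ t, A t)) (ℓ : ℕ) (t : ℤ) :
    Y C (ℓ : ℤ) t = ⊤ ↔ Cminus C (t + ℓ + 1) ⊔ Cplus C (t + 1) = ⊤ := by
  have hle : Cminus C t ≤ Cminus C (t + ℓ + 1) := fun a ha n hn => ha n (by omega)
  rw [Y, map_betaRes_eq_top, ← sup_assoc, sup_eq_left.2 hle]

/-- `C` is `ℓ`-controllable iff `X_ℓ^t = B^t` for every `t`, iff
`Y_ℓ^t = B^t` for every `t`. -/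
theorem statement2 (C : Subgroup (∀ t, A t)) (ℓ : ℕ) :
    (Controllable C ℓ ↔ ∀ t : ℤ, X C (ℓ : ℤ) t = ⊤) ∧
    (Controllable C ℓ ↔ ∀ t : ℤ, Y C (ℓ : ℤ) t = ⊤) := by
  simp only [controllable_iff, X_eq_top_iff, Y_eq_top_iff]
  refine ⟨⟨fun h t => ?_, fun h t => ?_⟩, ⟨fun h t => ?_, fun h t => ?_⟩⟩
  · simpa using h (t - ℓ)
  · simpa using h (t + ℓ)
  · have := h (t + 1)
    rwa [add_right_comm] at this
  · have := h (t - 1)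
    rwa [add_right_comm, sub_add_cancel] at this

end GroupSystemPaper
end

section
/- Let C be an ℓ-controllable group system. Then for every s ∈ ℤ, C^{s+} = C^{[s,s+ℓ]}·C^{(s+1)+}; that is, every codeword vanishing before time s factors as the product of a codeword supported on [s, s+ℓ] and a codeword vanishing before time s+1. -/
open scoped Pointwise

namespace GroupSystemPaper

variable {A : ℤ → Type*} [∀ t, Group (A t)]

/-- If `C` is `ℓ`-controllable then for every `s ∈ ℤ`,
`C^{s+} = C^{[s,s+ℓ]}·C^{(s+1)+}`. -/
theorem statement3 (C : Subgroup (∀ t, A t)) (ℓ : ℕ) (h : Controllable C ℓ) (s : ℤ) :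
    (Cplus C s : Set ↥C) =
      (Cint C s (s + (ℓ : ℤ)) : Set ↥C) * (Cplus C (s + 1) : Set ↥C) := by
  ext a
  rw [Set.mem_mul]
  constructor
  · intro ha
    have ha' : ∀ n < s, (a : ∀ s, A s) n = 1 := ha
    obtain ⟨c, hc1, hc2⟩ := h a 1 (s + 1)
    refine ⟨c, ?_, c⁻¹ * a, ?_, by group⟩
    · refine Subgroup.mem_inf.mpr ⟨?_, ?_⟩
      · intro n hn
        rw [hc1 n (by omega), ha' n hn]
      · intro n hn
        rw [hc2 n (by omega)]
        rfl
    · intro n hn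
      have h1 := hc1 n hn
      simp [h1]
  · rintro ⟨x, hx, y, hy, rfl⟩
    have hx' := (Subgroup.mem_inf.mp hx).1
    refine (Cplus C s).mul_mem hx' ?_
    intro n hn
    exact hy n (by omega)

end GroupSystemPaper
end

section
/- Let C be an ℓ-controllable group system. Then for every t ∈ ℤ and every j with 0 ≤ j ≤ ℓ, X_{j−1}^t·(X_j^t ∩ Y_{ℓ−j}^t) = X_j^t, a product of subgroups of the branch group B^t. -/
open scoped Pointwise

namespace GroupSystemPaper

variable {A : ℤ → Type*} [∀ t, Group (A t)]

/-- If `C` is `ℓ`-controllable then for every `t` and every `0 ≤ j ≤ ℓ`,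
`X_{j−1}^t·(X_j^t ∩ Y_{ℓ−j}^t) = X_j^t`. -/
theorem statement4 (C : Subgroup (∀ t, A t)) (ℓ : ℕ) (h : Controllable C ℓ)
    (t j : ℤ) (hj0 : 0 ≤ j) (hjℓ : j ≤ (ℓ : ℤ)) :
    (X C (j - 1) t : Set ↥(Branch C t)) *
        ((X C j t ⊓ Y C ((ℓ : ℤ) - j) t : Subgroup ↥(Branch C t)) : Set ↥(Branch C t)) =
      (X C j t : Set ↥(Branch C t)) := by
  ext x
  constructor
  · rintro ⟨y, hy, z, hz, rfl⟩
    refine mul_mem ?_ (Subgroup.mem_inf.mp hz).1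
    obtain ⟨a, ha, rfl⟩ := hy
    exact ⟨a, fun n hn => ha n (by omega), rfl⟩
  · rintro ⟨a, ha, rfl⟩
    obtain ⟨c, hc1, hc2⟩ := h a 1 (t - j + 1)
    have hcp : c ∈ Cplus C (t - j) := fun n hn => by
      rw [hc1 n (by omega)]; exact ha n hn
    have hcm : c ∈ Cminus C (t + ((ℓ : ℤ) - j) + 1) := fun n hn => by
      rw [hc2 n (by omega)]; simp
    refine ⟨betaRes C t (a * c⁻¹), ⟨a * c⁻¹, ?_, rfl⟩, betaRes C t c,
      Subgroup.mem_inf.mpr ⟨⟨c, hcp, rfl⟩, ⟨c, hcm, rfl⟩⟩, ?_⟩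
    · intro n hn
      simp [hc1 n (by omega)]
    · simp

end GroupSystemPaper
end

section
/- Let C be a group system. For every t ∈ ℤ, the kernel of the branch homomorphism β^t equals the set product C^{t−}·C^{(t+1)+}; consequently the branch group B^t is isomorphic to the quotient group C/(C^{t−}C^{(t+1)+}). -/
open scoped Pointwise

namespace GroupSystemPaper

variable {A : ℤ → Type*} [∀ t, Group (A t)]

/-- The kernel of the branch homomorphism `β^t` equals the set product
`C^{t−}·C^{(t+1)+}`; consequently `B^t ≅ C/(C^{t−}C^{(t+1)+})`. -/
theorem statement5 (C : Subgroup (∀ t, A t)) (t : ℤ) :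
    (((beta C t).ker : Set ↥C) = (Cminus C t : Set ↥C) * (Cplus C (t + 1) : Set ↥C)) ∧
    Nonempty (↥(Branch C t) ≃* (↥C ⧸ (Cminus C t ⊔ Cplus C (t + 1)))) := by
  have key : (beta C t).ker = Cminus C t ⊔ Cplus C (t + 1) := by
    ext a
    have h1 : a ∈ (beta C t).ker ↔ a ∈ stateN C t ∧ (a : ∀ s, A s) t = 1 ∧
        a ∈ stateN C (t + 1) := by
      rw [MonoidHom.mem_ker, ← QuotientGroup.eq_one_iff (N := stateN C t) a,
        ← QuotientGroup.eq_one_iff (N := stateN C (t + 1)) a]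
      exact Prod.ext_iff.trans (and_congr Iff.rfl Prod.ext_iff)
    rw [h1]
    constructor
    · rintro ⟨h, ht, -⟩
      obtain ⟨m, hm, p, hp, rfl⟩ := Subgroup.mem_sup_of_normal_right.mp h
      refine Subgroup.mul_mem_sup hm ?_
      intro n hn
      rcases lt_or_eq_of_le (Int.lt_add_one_iff.mp hn) with hlt | rfl
      · exact hp n hlt
      · have hmn : (m : ∀ s, A s) n = 1 := hm n le_rfl
        simpa [hmn] using ht
    · intro h
      obtain ⟨m, hm, p, hp, rfl⟩ := Subgroup.mem_sup_of_normal_right.mp h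
      refine ⟨Subgroup.mul_mem_sup hm fun n hn => hp n (by omega), ?_,
        Subgroup.mul_mem_sup (fun n hn => hm n (by omega)) hp⟩
      have hmt : (m : ∀ s, A s) t = 1 := hm t le_rfl
      have hpt : (p : ∀ s, A s) t = 1 := hp t (by omega)
      simp [hmt, hpt]
  refine ⟨?_, ⟨?_⟩⟩
  · rw [key, Subgroup.mul_normal]
  · exact (QuotientGroup.quotientKerEquivRange (beta C t)).symm.trans
      (QuotientGroup.quotientMulEquivOfEq key)

end GroupSystemPaper
end

section
/- Let C be a group system. For every t ∈ ℤ, X_0^t and Y_0^t are normal subgroups of the branch group B^t, and there are isomorphisms B^t/X_0^t ≅ Σ^t and B^t/Y_0^t ≅ Σ^{t+1}. In particular, for every t ∈ ℤ there is a state group isomorphism B^t/Y_0^t ≅ B^{t+1}/X_0^{t+1}. -/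
open scoped Pointwise

namespace GroupSystemPaper

variable {A : ℤ → Type*} [∀ t, Group (A t)]

lemma betaRes_surj (C : Subgroup (∀ t, A t)) (t : ℤ) :
    Function.Surjective (betaRes C t) :=
  MonoidHom.rangeRestrict_surjective _

lemma sigma_eq_one (C : Subgroup (∀ t, A t)) (t : ℤ) (a : ↥C) :
    sigma C t a = 1 ↔ a ∈ stateN C t :=
  QuotientGroup.eq_one_iff a

lemma betaRes_Cminus (C : Subgroup (∀ t, A t)) (t : ℤ) {m : ↥C} (hm : m ∈ Cminus C t) :
    betaRes C t m = 1 := by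
  apply Subtype.ext
  have h1 : sigma C t m = 1 := (sigma_eq_one C t m).2 (Subgroup.mem_sup_left hm)
  have h2 : evalHom C t m = 1 := hm t le_rfl
  have h3 : sigma C (t + 1) m = 1 := (sigma_eq_one C (t + 1) m).2
    (Subgroup.mem_sup_left (fun n hn => hm n (by omega)))
  exact Prod.ext h1 (Prod.ext h2 h3)

lemma betaRes_Cplus (C : Subgroup (∀ t, A t)) (t : ℤ) {m : ↥C} (hm : m ∈ Cplus C (t + 1)) :
    betaRes C t m = 1 := by
  apply Subtype.ext
  have h1 : sigma C t m = 1 := (sigma_eq_one C t m).2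
    (Subgroup.mem_sup_right (fun n hn => hm n (by omega)))
  have h2 : evalHom C t m = 1 := hm t (by omega)
  have h3 : sigma C (t + 1) m = 1 := (sigma_eq_one C (t + 1) m).2 (Subgroup.mem_sup_right hm)
  exact Prod.ext h1 (Prod.ext h2 h3)

/-- The projection of a branch to its left state. -/
def leftState (C : Subgroup (∀ t, A t)) (t : ℤ) : ↥(Branch C t) →* State C t :=
  (MonoidHom.fst _ _).comp (Branch C t).subtype

/-- The projection of a branch to its right state. -/
def rightState (C : Subgroup (∀ t, A t)) (t : ℤ) : ↥(Branch C t) →* State C (t + 1) :=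
  ((MonoidHom.snd _ _).comp (MonoidHom.snd _ _)).comp (Branch C t).subtype

lemma leftState_beta (C : Subgroup (∀ t, A t)) (t : ℤ) (a : ↥C) :
    leftState C t (betaRes C t a) = sigma C t a := rfl

lemma rightState_beta (C : Subgroup (∀ t, A t)) (t : ℤ) (a : ↥C) :
    rightState C t (betaRes C t a) = sigma C (t + 1) a := rfl

lemma leftState_surj (C : Subgroup (∀ t, A t)) (t : ℤ) :
    Function.Surjective (leftState C t) := by
  intro s
  obtain ⟨a, rfl⟩ := QuotientGroup.mk'_surjective _ s
  exact ⟨betaRes C t a, rfl⟩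

lemma rightState_surj (C : Subgroup (∀ t, A t)) (t : ℤ) :
    Function.Surjective (rightState C t) := by
  intro s
  obtain ⟨a, rfl⟩ := QuotientGroup.mk'_surjective _ s
  exact ⟨betaRes C t a, rfl⟩

lemma leftState_ker (C : Subgroup (∀ t, A t)) (t : ℤ) :
    X C 0 t = (leftState C t).ker := by
  ext b
  obtain ⟨a, rfl⟩ := betaRes_surj C t b
  rw [MonoidHom.mem_ker, leftState_beta, sigma_eq_one, X, sub_zero, Subgroup.mem_map]
  constructor
  · rintro ⟨c, hc, h⟩
    rw [← sigma_eq_one, ← leftState_beta, ← h, leftState_beta, sigma_eq_one]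
    exact Subgroup.mem_sup_right hc
  · intro h
    obtain ⟨m, hm, p, hp, rfl⟩ := Subgroup.mem_sup_of_normal_left.1 h
    exact ⟨p, hp, by rw [map_mul, betaRes_Cminus C t hm, one_mul]⟩

lemma rightState_ker (C : Subgroup (∀ t, A t)) (t : ℤ) :
    Y C 0 t = (rightState C t).ker := by
  ext b
  obtain ⟨a, rfl⟩ := betaRes_surj C t b
  rw [MonoidHom.mem_ker, rightState_beta, sigma_eq_one, Y, add_zero, Subgroup.mem_map]
  constructor
  · rintro ⟨c, hc, h⟩
    rw [← sigma_eq_one, ← rightState_beta, ← h, rightState_beta, sigma_eq_one]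
    exact Subgroup.mem_sup_left hc
  · intro h
    obtain ⟨m, hm, p, hp, rfl⟩ := Subgroup.mem_sup_of_normal_left.1 h
    exact ⟨m, hm, by rw [map_mul, betaRes_Cplus C t hp, mul_one]⟩

lemma equivX (C : Subgroup (∀ t, A t)) (t : ℤ) :
    Nonempty ((↥(Branch C t) ⧸ X C 0 t) ≃* State C t) :=
  ⟨(QuotientGroup.quotientMulEquivOfEq (leftState_ker C t)).trans
    (QuotientGroup.quotientKerEquivOfSurjective _ (leftState_surj C t))⟩

lemma equivY (C : Subgroup (∀ t, A t)) (t : ℤ) :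
    Nonempty ((↥(Branch C t) ⧸ Y C 0 t) ≃* State C (t + 1)) :=
  ⟨(QuotientGroup.quotientMulEquivOfEq (rightState_ker C t)).trans
    (QuotientGroup.quotientKerEquivOfSurjective _ (rightState_surj C t))⟩

/-- `X_0^t` and `Y_0^t` are normal in `B^t`, with
`B^t/X_0^t ≅ Σ^t` and `B^t/Y_0^t ≅ Σ^{t+1}`; in particular
`B^t/Y_0^t ≅ B^{t+1}/X_0^{t+1}`. -/
theorem statement6 (C : Subgroup (∀ t, A t)) (t : ℤ) :
    (X C 0 t).Normal ∧ (Y C 0 t).Normal ∧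
    Nonempty ((↥(Branch C t) ⧸ X C 0 t) ≃* State C t) ∧
    Nonempty ((↥(Branch C t) ⧸ Y C 0 t) ≃* State C (t + 1)) ∧
    Nonempty ((↥(Branch C t) ⧸ Y C 0 t) ≃* (↥(Branch C (t + 1)) ⧸ X C 0 (t + 1))) := by
  obtain ⟨e⟩ := equivY C t
  obtain ⟨f⟩ := equivX C (t + 1)
  exact ⟨X_normal C 0 t, Y_normal C 0 t, equivX C t, ⟨e⟩, ⟨e.trans f.symm⟩⟩

end GroupSystemPaper
end

section
/- Let C be a group system. For every t ∈ ℤ and every integer k ≥ 0, Δ_k^t = X_0^t ∩ Y_k^t = β^t(C^{[t,t+k]}); that is, the intersection of the branch images of C^{t+} and C^{(t+k+1)−} equals the branch image of the codewords supported on [t, t+k]. -/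
open scoped Pointwise

namespace GroupSystemPaper

variable {A : ℤ → Type*} [∀ t, Group (A t)]

/-- For every `t ∈ ℤ` and `k ≥ 0`,
`Δ_k^t = X_0^t ∩ Y_k^t = β^t(C^{[t,t+k]})`. -/
theorem statement7 (C : Subgroup (∀ t, A t)) (t : ℤ) (k : ℕ) :
    X C 0 t ⊓ Y C (k : ℤ) t = (Cint C t (t + (k : ℤ))).map (betaRes C t) := by
  have hker : ∀ q ∈ Cplus C (t + 1), betaRes C t q = 1 := by
    intro q hq
    apply Subtype.ext
    show (sigma C t q, evalHom C t q, sigma C (t + 1) q) = 1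
    have h1 : sigma C t q = 1 :=
      (QuotientGroup.eq_one_iff q).mpr
        (Subgroup.mem_sup_right (fun n hn => hq n (by omega)))
    have h2 : evalHom C t q = 1 := hq t (by omega)
    have h3 : sigma C (t + 1) q = 1 :=
      (QuotientGroup.eq_one_iff q).mpr (Subgroup.mem_sup_right hq)
    rw [h1, h2, h3]
    rfl
  apply le_antisymm
  · rintro x ⟨⟨a, ha, rfl⟩, ⟨b, hb, hab⟩⟩
    have hd : betaRes C t (a⁻¹ * b) = 1 := by rw [map_mul, map_inv, hab]; simp
    have hd' : (sigma C t (a⁻¹ * b), evalHom C t (a⁻¹ * b), sigma C (t + 1) (a⁻¹ * b)) = 1 :=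
      congrArg Subtype.val hd
    have h2 : evalHom C t (a⁻¹ * b) = 1 := congrArg (fun z => z.2.1) hd'
    have h3 : sigma C (t + 1) (a⁻¹ * b) = 1 := congrArg (fun z => z.2.2) hd'
    have h3' : a⁻¹ * b ∈ Cplus C (t + 1) ⊔ Cminus C (t + 1) := by
      rw [sup_comm]
      exact (QuotientGroup.eq_one_iff _).mp h3
    obtain ⟨q, hq, p, hp, hqp⟩ := Subgroup.mem_sup_of_normal_right.mp h3'
    have hpt : (p : ∀ s, A s) t = 1 := by
      rw [← hqp, map_mul] at h2
      have hqt : evalHom C t q = 1 := hq t (by omega)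
      rw [hqt, one_mul] at h2
      exact h2
    have hc : a * q = b * p⁻¹ := by
      rw [eq_mul_inv_iff_mul_eq, mul_assoc, hqp, mul_inv_cancel_left]
    refine ⟨a * q, ⟨?_, ?_⟩, ?_⟩
    · refine mul_mem (fun n hn => ha n (by omega)) (fun n hn => hq n (by omega))
    · show a * q ∈ Cminus C (t + k + 1)
      rw [hc]
      refine mul_mem hb (inv_mem (fun n hn => hp n (by omega)))
    · rw [map_mul, hker q hq, mul_one]
  · rintro x ⟨a, ⟨h1, h2⟩, rfl⟩
    exact ⟨⟨a, fun n hn => h1 n (by omega), rfl⟩, ⟨a, h2, rfl⟩⟩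

end GroupSystemPaper
end

section
/- Let C be a group system, t ∈ ℤ, and k ≥ 1. Then C^{[t,t+k−1]}·C^{[t+1,t+k]} is a normal subgroup of C^{[t,t+k]}, χ^t(C^{[t,t+k−1]}) is a normal subgroup of χ^t(C^{[t,t+k]}), and the assignment a·(C^{[t,t+k−1]}C^{[t+1,t+k]}) ↦ χ^t(a)·χ^t(C^{[t,t+k−1]}) defines an isomorphism C^{[t,t+k]}/(C^{[t,t+k−1]}C^{[t+1,t+k]}) ≅ χ^t(C^{[t,t+k]})/χ^t(C^{[t,t+k−1]}). -/
open scoped Pointwise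

namespace GroupSystemPaper

variable {A : ℤ → Type*} [∀ t, Group (A t)]

/-- `C^{[t,t+k−1]}C^{[t+1,t+k]}` is normal in `C^{[t,t+k]}`,
`χ^t(C^{[t,t+k−1]})` is normal in `χ^t(C^{[t,t+k]})`, and
`a·(C^{[t,t+k−1]}C^{[t+1,t+k]}) ↦ χ^t(a)·χ^t(C^{[t,t+k−1]})` defines an isomorphism
`C^{[t,t+k]}/(C^{[t,t+k−1]}C^{[t+1,t+k]}) ≅ χ^t(C^{[t,t+k]})/χ^t(C^{[t,t+k−1]})`. -/
theorem statement8 (C : Subgroup (∀ t, A t)) (t : ℤ) (k : ℕ) (hk : 1 ≤ k) :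
    ((granN C t k).subgroupOf (Cint C t (t + (k : ℤ)))).Normal ∧
    (((Cint C t (t + (k : ℤ) - 1)).map (evalHom C t)).subgroupOf
        ((Cint C t (t + (k : ℤ))).map (evalHom C t))).Normal ∧
    ∀ (hM : (((Cint C t (t + (k : ℤ) - 1)).map (evalHom C t)).subgroupOf
        ((Cint C t (t + (k : ℤ))).map (evalHom C t))).Normal),
      haveI := hM
      ∃ e : (↥(Cint C t (t + (k : ℤ))) ⧸ (granN C t k).subgroupOf (Cint C t (t + (k : ℤ)))) ≃*
            (↥((Cint C t (t + (k : ℤ))).map (evalHom C t)) ⧸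
              ((Cint C t (t + (k : ℤ) - 1)).map (evalHom C t)).subgroupOf
                ((Cint C t (t + (k : ℤ))).map (evalHom C t))),
        ∀ (a : ↥C) (ha : a ∈ Cint C t (t + (k : ℤ))),
          e (QuotientGroup.mk ⟨a, ha⟩) =
            QuotientGroup.mk ⟨evalHom C t a, Subgroup.mem_map_of_mem _ ha⟩ := by
  refine ⟨inferInstance, ?_, ?_⟩
  · constructor
    rintro ⟨_, n⟩ hx ⟨_, g, hg, rfl⟩
    obtain ⟨x, hx2, rfl⟩ := Subgroup.mem_subgroupOf.mp hx
    refine Subgroup.mem_subgroupOf.mpr ⟨g * x * g⁻¹, (Cint_normal C _ _).conj_mem _ hx2 g, ?_⟩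
    simp
  · intro hM
    haveI := hM
    let f := (QuotientGroup.mk' (((Cint C t (t + (k : ℤ) - 1)).map (evalHom C t)).subgroupOf
      ((Cint C t (t + (k : ℤ))).map (evalHom C t)))).comp
        ((evalHom C t).subgroupMap (Cint C t (t + (k : ℤ))))
    have hf : Function.Surjective f :=
      (QuotientGroup.mk'_surjective _).comp ((evalHom C t).subgroupMap_surjective _)
    have hker : (granN C t k).subgroupOf (Cint C t (t + (k : ℤ))) = f.ker := by
      ext ⟨a, ha⟩
      have h1 : (⟨a, ha⟩ : ↥(Cint C t (t + (k : ℤ)))) ∈ f.ker ↔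
          evalHom C t a ∈ (Cint C t (t + (k : ℤ) - 1)).map (evalHom C t) := by
        rw [MonoidHom.mem_ker]
        exact (QuotientGroup.eq_one_iff _).trans Subgroup.mem_subgroupOf
      rw [h1, Subgroup.mem_subgroupOf]
      constructor
      · intro h
        obtain ⟨b, hb, c, hc, hbc⟩ := Subgroup.mem_sup_of_normal_right.mp h
        refine ⟨b, hb, ?_⟩
        have hc1 : evalHom C t c = 1 := hc.1 t (by omega)
        have hbc' : b * c = a := hbc
        rw [← hbc', map_mul, hc1, mul_one]
      · rintro ⟨b, hb, hab⟩
        refine Subgroup.mem_sup_of_normal_right.mpr ⟨b, hb, b⁻¹ * a, ⟨?_, ?_⟩, by simp⟩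
        · intro n hn
          have hab' : (b : ∀ s, A s) t = (a : ∀ s, A s) t := hab
          rcases (show n < t ∨ n = t by omega) with h | rfl
          · have e1 := hb.1 n h
            have e2 := ha.1 n h
            simp [e1, e2]
          · simp [hab']
        · intro n hn
          have e1 := hb.2 n (by omega)
          have e2 := ha.2 n hn
          simp [e1, e2]
    refine ⟨(QuotientGroup.quotientMulEquivOfEq hker).trans
      (QuotientGroup.quotientKerEquivOfSurjective f hf), fun a ha => rfl⟩

end GroupSystemPaper
end

section
/- Let C be a group system, t ∈ ℤ, and k ≥ 1. Then χ^t(C^{[t,t+k−1]}) is normal in χ^t(C^{[t,t+k]}), χ^{t+k}(C^{[t+1,t+k]}) is normal in χ^{t+k}(C^{[t,t+k]}), and there is an isomorphism of quotient groups χ^t(C^{[t,t+k]})/χ^t(C^{[t,t+k−1]}) ≅ χ^{t+k}(C^{[t,t+k]})/χ^{t+k}(C^{[t+1,t+k]}); in particular these two quotients have the same cardinality. -/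
open scoped Pointwise

namespace GroupSystemPaper

variable {A : ℤ → Type*} [∀ t, Group (A t)]

/-- Abstract form of the result. -/
lemma abstract_iso {G M N : Type*} [Group G] [Group M] [Group N] (H K L : Subgroup G)
    (f : G →* M) (g : G →* N) (hKH : K ≤ H) (hLH : L ≤ H)
    (hf : ∀ a ∈ H, f a = 1 ↔ a ∈ L) (hg : ∀ a ∈ H, g a = 1 ↔ a ∈ K)
    (h1 : ((K.map f).subgroupOf (H.map f)).Normal)
    (h2 : ((L.map g).subgroupOf (H.map g)).Normal) :
    Nonempty ((↥(H.map f) ⧸ (K.map f).subgroupOf (H.map f)) ≃*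
      (↥(H.map g) ⧸ (L.map g).subgroupOf (H.map g))) := by
  let φ := (QuotientGroup.mk' ((K.map f).subgroupOf (H.map f))).comp (f.subgroupMap H)
  let ψ := (QuotientGroup.mk' ((L.map g).subgroupOf (H.map g))).comp (g.subgroupMap H)
  have hφ : Function.Surjective φ :=
    (QuotientGroup.mk'_surjective _).comp (f.subgroupMap_surjective H)
  have hψ : Function.Surjective ψ :=
    (QuotientGroup.mk'_surjective _).comp (g.subgroupMap_surjective H)
  have hker : φ.ker = ψ.ker := by
    ext ⟨a, ha⟩
    have e1 : (⟨a, ha⟩ : H) ∈ φ.ker ↔ f a ∈ K.map f := by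
      rw [MonoidHom.mem_ker]
      exact QuotientGroup.eq_one_iff _
    have e2 : (⟨a, ha⟩ : H) ∈ ψ.ker ↔ g a ∈ L.map g := by
      rw [MonoidHom.mem_ker]
      exact QuotientGroup.eq_one_iff _
    rw [e1, e2]
    constructor
    · rintro ⟨b, hb, hab⟩
      have hbH := hKH hb
      refine ⟨b⁻¹ * a, (hf _ (H.mul_mem (H.inv_mem hbH) ha)).1 (by simp [hab]), ?_⟩
      simp [(hg b hbH).2 hb]
    · rintro ⟨b, hb, hab⟩
      have hbH := hLH hb
      refine ⟨b⁻¹ * a, (hg _ (H.mul_mem (H.inv_mem hbH) ha)).1 (by simp [hab]), ?_⟩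
      simp [(hf b hbH).2 hb]
  exact ⟨(QuotientGroup.quotientKerEquivOfSurjective φ hφ).symm.trans
    ((QuotientGroup.quotientMulEquivOfEq hker).trans
      (QuotientGroup.quotientKerEquivOfSurjective ψ hψ))⟩

lemma map_subgroupOf_normal {G M : Type*} [Group G] [Group M] (H K : Subgroup G) [hK : K.Normal]
    (f : G →* M) : ((K.map f).subgroupOf (H.map f)).Normal := by
  constructor
  rintro ⟨_, _⟩ ⟨b, hb, rfl⟩ ⟨_, ⟨c, hc, rfl⟩⟩
  exact ⟨c * b * c⁻¹, hK.conj_mem b hb c, by simp⟩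

lemma mem_Cint_iff (C : Subgroup (∀ t, A t)) (s u : ℤ) (a : C) :
    a ∈ Cint C s u ↔ (∀ n < s, (a : ∀ s, A s) n = 1) ∧
      ∀ n, u + 1 ≤ n → (a : ∀ s, A s) n = 1 := Iff.rfl

/-- `χ^t(C^{[t,t+k−1]})` is normal in `χ^t(C^{[t,t+k]})`,
`χ^{t+k}(C^{[t+1,t+k]})` is normal in `χ^{t+k}(C^{[t,t+k]})`, and
`χ^t(C^{[t,t+k]})/χ^t(C^{[t,t+k−1]}) ≅ χ^{t+k}(C^{[t,t+k]})/χ^{t+k}(C^{[t+1,t+k]})`;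
in particular these two quotients have the same cardinality. -/
theorem statement9 (C : Subgroup (∀ t, A t)) (t : ℤ) (k : ℕ) (hk : 1 ≤ k) :
    (((Cint C t (t + (k : ℤ) - 1)).map (evalHom C t)).subgroupOf
        ((Cint C t (t + (k : ℤ))).map (evalHom C t))).Normal ∧
    (((Cint C (t + 1) (t + (k : ℤ))).map (evalHom C (t + (k : ℤ)))).subgroupOf
        ((Cint C t (t + (k : ℤ))).map (evalHom C (t + (k : ℤ))))).Normal ∧
    (∀ (h1 : (((Cint C t (t + (k : ℤ) - 1)).map (evalHom C t)).subgroupOf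
          ((Cint C t (t + (k : ℤ))).map (evalHom C t))).Normal)
       (h2 : (((Cint C (t + 1) (t + (k : ℤ))).map (evalHom C (t + (k : ℤ)))).subgroupOf
          ((Cint C t (t + (k : ℤ))).map (evalHom C (t + (k : ℤ))))).Normal),
      haveI := h1
      haveI := h2
      Nonempty
        ((↥((Cint C t (t + (k : ℤ))).map (evalHom C t)) ⧸
            ((Cint C t (t + (k : ℤ) - 1)).map (evalHom C t)).subgroupOf
              ((Cint C t (t + (k : ℤ))).map (evalHom C t))) ≃*
         (↥((Cint C t (t + (k : ℤ))).map (evalHom C (t + (k : ℤ)))) ⧸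
            ((Cint C (t + 1) (t + (k : ℤ))).map (evalHom C (t + (k : ℤ)))).subgroupOf
              ((Cint C t (t + (k : ℤ))).map (evalHom C (t + (k : ℤ))))))) ∧
    Nat.card
        (↥((Cint C t (t + (k : ℤ))).map (evalHom C t)) ⧸
          ((Cint C t (t + (k : ℤ) - 1)).map (evalHom C t)).subgroupOf
            ((Cint C t (t + (k : ℤ))).map (evalHom C t))) =
      Nat.card
        (↥((Cint C t (t + (k : ℤ))).map (evalHom C (t + (k : ℤ)))) ⧸
          ((Cint C (t + 1) (t + (k : ℤ))).map (evalHom C (t + (k : ℤ)))).subgroupOf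
            ((Cint C t (t + (k : ℤ))).map (evalHom C (t + (k : ℤ))))) := by
  have h1 := map_subgroupOf_normal (Cint C t (t + (k : ℤ))) (Cint C t (t + (k : ℤ) - 1))
    (evalHom C t)
  have h2 := map_subgroupOf_normal (Cint C t (t + (k : ℤ))) (Cint C (t + 1) (t + (k : ℤ)))
    (evalHom C (t + (k : ℤ)))
  have key := abstract_iso (Cint C t (t + (k : ℤ))) (Cint C t (t + (k : ℤ) - 1))
    (Cint C (t + 1) (t + (k : ℤ))) (evalHom C t) (evalHom C (t + (k : ℤ)))
    (fun a ha => by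
      rw [mem_Cint_iff] at ha ⊢
      exact ⟨ha.1, fun n hn => ha.2 n (by omega)⟩)
    (fun a ha => by
      rw [mem_Cint_iff] at ha ⊢
      exact ⟨fun n hn => ha.1 n (by omega), ha.2⟩)
    (fun a ha => by
      rw [mem_Cint_iff] at ha ⊢
      refine ⟨fun h => ⟨fun n hn => ?_, ha.2⟩, fun h => h.1 t (by omega)⟩
      rcases (Int.lt_add_one_iff.1 hn).lt_or_eq with h' | rfl
      · exact ha.1 n h'
      · exact h)
    (fun a ha => by
      rw [mem_Cint_iff] at ha ⊢
      refine ⟨fun h => ⟨ha.1, fun n hn => ?_⟩, fun h => h.2 _ (by omega)⟩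
      rcases (show t + (k : ℤ) ≤ n by omega).lt_or_eq with h' | rfl
      · exact ha.2 n (by omega)
      · exact h)
  refine ⟨h1, h2, fun h1 h2 => key h1 h2, ?_⟩
  obtain ⟨e⟩ := key h1 h2
  exact Nat.card_congr e.toEquiv

end GroupSystemPaper
end

section
/- Let C be a group system. For a time t' and a subset S ⊆ B^{t'}, define the following-branch set F(S) = {β^{t'+1}(a) : a ∈ C, β^{t'}(a) ∈ S}. Then for every t ∈ ℤ, every k ≥ 0, and every j with 0 ≤ j ≤ k, the shift property holds: F(X_{j−1}^{t+j}·(X_j^{t+j} ∩ Y_{k−j}^{t+j})) = X_j^{t+j+1}·(X_{j+1}^{t+j+1} ∩ Y_{k−j−1}^{t+j+1}). -/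
open scoped Pointwise

namespace GroupSystemPaper

variable {A : ℤ → Type*} [∀ t, Group (A t)]

lemma Cplus_anti (C : Subgroup (∀ t, A t)) {s t : ℤ} (h : s ≤ t) : Cplus C t ≤ Cplus C s :=
  fun _ ha n hn => ha n (lt_of_lt_of_le hn h)

lemma Cminus_mono (C : Subgroup (∀ t, A t)) {s t : ℤ} (h : s ≤ t) : Cminus C s ≤ Cminus C t :=
  fun _ ha n hn => ha n (le_trans h hn)

lemma betaRes_eq_one_iff (C : Subgroup (∀ t, A t)) (s : ℤ) (a : ↥C) :
    betaRes C s a = 1 ↔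
      a ∈ stateN C s ∧ (a : ∀ n, A n) s = 1 ∧ a ∈ stateN C (s + 1) := by
  have h1 : betaRes C s a = 1 ↔ beta C s a = 1 := by
    rw [Subtype.ext_iff]; rfl
  rw [h1]
  have h2 : beta C s a = (sigma C s a, (a : ∀ n, A n) s, sigma C (s + 1) a) := rfl
  rw [h2, Prod.mk_eq_one, Prod.mk_eq_one]
  simp only [sigma, QuotientGroup.mk'_apply, QuotientGroup.eq_one_iff]

lemma betaRes_plus (C : Subgroup (∀ t, A t)) (s : ℤ) {a : ↥C} (ha : a ∈ Cplus C (s + 1)) :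
    betaRes C s a = 1 := by
  rw [betaRes_eq_one_iff]
  exact ⟨Subgroup.mem_sup_right (Cplus_anti C (by omega) ha), ha s (by omega),
    Subgroup.mem_sup_right ha⟩

lemma betaRes_minus (C : Subgroup (∀ t, A t)) (s : ℤ) {a : ↥C} (ha : a ∈ Cminus C s) :
    betaRes C s a = 1 := by
  rw [betaRes_eq_one_iff]
  exact ⟨Subgroup.mem_sup_left ha, ha s le_rfl,
    Subgroup.mem_sup_left (Cminus_mono C (by omega) ha)⟩

/-- The kernel of `β^s` is `C^{(s+1)+} C^{s-}`. -/
lemma betaRes_ker (C : Subgroup (∀ t, A t)) (s : ℤ) {a : ↥C} (h : betaRes C s a = 1) :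
    ∃ q ∈ Cplus C (s + 1), ∃ n ∈ Cminus C s, q * n = a := by
  obtain ⟨h1, h2, -⟩ := (betaRes_eq_one_iff C s a).1 h
  rw [stateN, sup_comm, Subgroup.mem_sup_of_normal_right] at h1
  obtain ⟨q, hq, n, hn, rfl⟩ := h1
  refine ⟨q, ?_, n, hn, rfl⟩
  intro i hi
  rcases lt_or_eq_of_le (Int.lt_add_one_iff.1 hi) with hi | rfl
  · exact hq i hi
  · have h3 : (n : ∀ n, A n) i = 1 := hn i le_rfl
    simpa [h3] using h2

lemma betaRes_ker' (C : Subgroup (∀ t, A t)) (s : ℤ) {a b : ↥C}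
    (h : betaRes C s a = betaRes C s b) :
    ∃ q ∈ Cplus C (s + 1), ∃ n ∈ Cminus C s, a * q * n = b := by
  obtain ⟨q, hq, n, hn, e⟩ := betaRes_ker C s (a := a⁻¹ * b) (by simp [h])
  exact ⟨q, hq, n, hn, by rw [mul_assoc, e]; group⟩

lemma map_inf_eq (C : Subgroup (∀ t, A t)) {s u v : ℤ} (hu : u ≤ s + 1) (hv : s ≤ v) :
    (Cplus C u).map (betaRes C s) ⊓ (Cminus C v).map (betaRes C s) =
      (Cplus C u ⊓ Cminus C v).map (betaRes C s) := by
  apply le_antisymm _ (Subgroup.map_inf_le _ _ _)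
  rintro x ⟨⟨p, hp, rfl⟩, ⟨m, hm, e⟩⟩
  obtain ⟨q, hq, n, hn, e'⟩ := betaRes_ker' C s e.symm
  refine ⟨p * q, ⟨mul_mem hp (Cplus_anti C hu hq), ?_⟩, by simp [betaRes_plus C s hq]⟩
  rw [eq_mul_inv_of_mul_eq e']
  exact (Cminus C v).mul_mem hm ((Cminus C v).inv_mem (Cminus_mono C hv hn))

lemma X_mul_eq (C : Subgroup (∀ t, A t)) {s u v i j l : ℤ} (hu : u ≤ s + 1) (hv : s ≤ v)
    (hi : s - i = u + 1) (hj : s - j = u) (hl : s + l + 1 = v) :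
    (X C i s : Set ↥(Branch C s)) * ((X C j s ⊓ Y C l s : Subgroup ↥(Branch C s)) :
      Set ↥(Branch C s)) =
    ((Cplus C (u + 1) ⊔ (Cplus C u ⊓ Cminus C v)).map (betaRes C s) : Set ↥(Branch C s)) := by
  rw [← Subgroup.normal_mul, Subgroup.map_sup, ← map_inf_eq C hu hv]
  simp only [X, Y, hi, hj, hl]

lemma FSet_map (C : Subgroup (∀ t, A t)) {s u : ℤ} (hu : u ≤ s + 1) (H : Subgroup ↥C)
    (hH : Cplus C u ≤ H) :
    FSet C s (s + 1) (H.map (betaRes C s) : Set ↥(Branch C s)) =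
      (H.map (betaRes C (s + 1)) : Set ↥(Branch C (s + 1))) := by
  ext x
  constructor
  · rintro ⟨a, ⟨h, hh, e⟩, rfl⟩
    obtain ⟨q, hq, n, hn, rfl⟩ := betaRes_ker' C s e
    refine ⟨h * q, mul_mem hh (hH (Cplus_anti C hu hq)), ?_⟩
    rw [map_mul _ (h * q) n, betaRes_minus C (s + 1) (Cminus_mono C (by omega) hn), mul_one]
  · rintro ⟨h, hh, rfl⟩
    exact ⟨h, ⟨h, hh, rfl⟩, rfl⟩

/-- Shift property of the following-branch operator
`F(S) = {β^{t'+1}(a) : a ∈ C, β^{t'}(a) ∈ S}`: for `0 ≤ j ≤ k`,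
`F(X_{j−1}^{t+j}·(X_j^{t+j} ∩ Y_{k−j}^{t+j})) = X_j^{t+j+1}·(X_{j+1}^{t+j+1} ∩ Y_{k−j−1}^{t+j+1})`. -/
theorem statement12 (C : Subgroup (∀ t, A t)) (t : ℤ) (k : ℕ) (j : ℕ) (hj : j ≤ k) :
    FSet C (t + (j : ℤ)) (t + (j : ℤ) + 1)
        ((X C ((j : ℤ) - 1) (t + (j : ℤ)) : Set ↥(Branch C (t + (j : ℤ)))) *
          ((X C (j : ℤ) (t + (j : ℤ)) ⊓ Y C ((k : ℤ) - (j : ℤ)) (t + (j : ℤ)) :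
              Subgroup ↥(Branch C (t + (j : ℤ)))) : Set ↥(Branch C (t + (j : ℤ))))) =
      (X C (j : ℤ) (t + (j : ℤ) + 1) : Set ↥(Branch C (t + (j : ℤ) + 1))) *
        ((X C ((j : ℤ) + 1) (t + (j : ℤ) + 1) ⊓
            Y C ((k : ℤ) - (j : ℤ) - 1) (t + (j : ℤ) + 1) :
            Subgroup ↥(Branch C (t + (j : ℤ) + 1))) : Set ↥(Branch C (t + (j : ℤ) + 1))) := by
  rw [X_mul_eq C (u := t) (v := t + k + 1) (by omega) (by omega) (by omega) (by omega) (by omega),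
    X_mul_eq C (u := t) (v := t + k + 1) (by omega) (by omega) (by omega) (by omega) (by omega)]
  exact FSet_map C (u := t + 1) (by omega) _ le_sup_left

end GroupSystemPaper
end
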